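/- Let Ω ⊂ ℍ be a bounded domain, θ ∈ [0,2π), u ∈ ℍ. For every z ∈ Ω there exists ${}^θ_uB_z ∈ {}^θ_u𝒜(Ω)$ such that $f(z) = ∫_Ω \overline{{}^θ_uB_z(ζ)}\,f(ζ)\,dμ_ζ$ for every f ∈ ${}^θ_u𝒜(Ω)$ (quaternionic conjugation, Bochner integral); i.e., the space ${}^θ_u𝒜(Ω)$ possesses a reproducing Bergman kernel ${}^θ_u𝓑_Ω(z,ζ) = \overline{{}^θ_uB_z(ζ)}$. -/

import Mathlib

open MeasureTheory

noncomputable section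

/-- The real quaternions `ℍ`. -/
abbrev H4 : Type := Quaternion ℝ

instance : MeasurableSpace H4 := borel _
instance : BorelSpace H4 := ⟨rfl⟩

/-- The quaternion unit `i`. -/
def qI : H4 := ⟨0, 1, 0, 0⟩
/-- The quaternion unit `j`. -/
def qJ : H4 := ⟨0, 0, 1, 0⟩
/-- `e^{iθ} = cos θ + (sin θ) i` as a quaternion. -/
def eIθ (θ : ℝ) : H4 := ⟨Real.cos θ, Real.sin θ, 0, 0⟩
/-- The basis direction `i e^{iθ} j`. -/
def e2 (θ : ℝ) : H4 := qI * eIθ θ * qJ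
/-- The basis direction `e^{iθ} j`. -/
def e3 (θ : ℝ) : H4 := eIθ θ * qJ

/-- Third θ-coordinate of a quaternion `z = x₀ + x₁ i + x₂ (i e^{iθ} j) + x₃ (e^{iθ} j)`. -/
def x2θ (θ : ℝ) (z : H4) : ℝ := -z.imJ * Real.sin θ + z.imK * Real.cos θ
/-- Fourth θ-coordinate of a quaternion. -/
def x3θ (θ : ℝ) (z : H4) : ℝ := z.imJ * Real.cos θ + z.imK * Real.sin θ

/-- The θ-inner product `⟨u,z⟩_θ`: the dot product of θ-coordinates. -/
def innerθ (θ : ℝ) (u z : H4) : ℝ :=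
  u.re * z.re + u.imI * z.imI + x2θ θ u * x2θ θ z + x3θ θ u * x3θ θ z

/-- Left θ-Cauchy–Riemann operator
`{}^θ𝒟 f = ∂f/∂x₀ + i ∂f/∂x₁ + (i e^{iθ} j) ∂f/∂x₂ + (e^{iθ} j) ∂f/∂x₃`. -/
def Dl (θ : ℝ) (f : H4 → H4) (z : H4) : H4 :=
  fderiv ℝ f z 1 + qI * fderiv ℝ f z qI + e2 θ * fderiv ℝ f z (e2 θ) +
    e3 θ * fderiv ℝ f z (e3 θ)

/-- Left (θ,u)-Cauchy–Riemann operator `{}^θ_u𝒟 f = {}^θ𝒟 f + u f`. -/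
def Dlu (θ : ℝ) (u : H4) (f : H4 → H4) (z : H4) : H4 := Dl θ f z + u * f z

/-- Right θ-Cauchy–Riemann operator. -/
def Dr (θ : ℝ) (f : H4 → H4) (z : H4) : H4 :=
  fderiv ℝ f z 1 + fderiv ℝ f z qI * qI + fderiv ℝ f z (e2 θ) * e2 θ +
    fderiv ℝ f z (e3 θ) * e3 θ

/-- Right (θ,u)-Cauchy–Riemann operator `{}^θ𝒟_{r,u} f = {}^θ𝒟_r f + f u`. -/
def Dru (θ : ℝ) (u : H4) (f : H4 → H4) (z : H4) : H4 := Dr θ f z + f z * u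

/-- Embedding of ℂ into the quaternions, `ℂ ≅ ℝ + ℝi ⊂ ℍ`. -/
def toH (a : ℂ) : H4 := ⟨a.re, a.im, 0, 0⟩

/-- First complex θ-component of a quaternion: `z₁ = x₀ + x₁ i`. -/
def c1 (z : H4) : ℂ := ⟨z.re, z.imI⟩
/-- Second complex θ-component of a quaternion: `z₂ = x₂ + x₃ i`. -/
def c2 (θ : ℝ) (z : H4) : ℂ := ⟨x2θ θ z, x3θ θ z⟩

/-- Wirtinger operator `∂/∂z̄₁ = ∂/∂x₀ + i ∂/∂x₁` on ℂ-valued functions. -/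
def db1 (f : H4 → ℂ) (z : H4) : ℂ := fderiv ℝ f z 1 + Complex.I * fderiv ℝ f z qI
/-- Wirtinger operator `∂/∂z̄₂ = ∂/∂x₂ + i ∂/∂x₃` on ℂ-valued functions. -/
def db2 (θ : ℝ) (f : H4 → ℂ) (z : H4) : ℂ :=
  fderiv ℝ f z (e2 θ) + Complex.I * fderiv ℝ f z (e3 θ)
/-- Wirtinger operator `∂/∂z₂ = ∂/∂x₂ − i ∂/∂x₃` on ℂ-valued functions. -/
def dz2 (θ : ℝ) (f : H4 → ℂ) (z : H4) : ℂ :=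
  fderiv ℝ f z (e2 θ) - Complex.I * fderiv ℝ f z (e3 θ)

/-- `e^{iθ}` as a complex number. -/
def cexpI (θ : ℝ) : ℂ := ⟨Real.cos θ, Real.sin θ⟩

/-- The (θ,u)-hyperholomorphic Bergman space `{}^θ_u𝒜(Ω)`: C¹ null solutions of `{}^θ_u𝒟`
with `∫_Ω |f|² dμ < ∞`. -/
def memA (θ : ℝ) (u : H4) (Ω : Set H4) (f : H4 → H4) : Prop :=
  ContDiffOn ℝ 1 f Ω ∧ (∀ z ∈ Ω, Dlu θ u f z = 0) ∧
    IntegrableOn (fun z => ‖f z‖ ^ 2) Ω volume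

/-! ### Algebra of the basis -/

lemma o_re : (1 : H4).re = 1 := rfl
lemma o_imI : (1 : H4).imI = 0 := rfl
lemma o_imJ : (1 : H4).imJ = 0 := rfl
lemma o_imK : (1 : H4).imK = 0 := rfl
lemma qI_re : qI.re = 0 := rfl
lemma qI_imI : qI.imI = 1 := rfl
lemma qI_imJ : qI.imJ = 0 := rfl
lemma qI_imK : qI.imK = 0 := rfl
lemma qJ_re : qJ.re = 0 := rfl
lemma qJ_imI : qJ.imI = 0 := rfl
lemma qJ_imJ : qJ.imJ = 1 := rfl
lemma qJ_imK : qJ.imK = 0 := rfl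
lemma eI_re (θ : ℝ) : (eIθ θ).re = Real.cos θ := rfl
lemma eI_imI (θ : ℝ) : (eIθ θ).imI = Real.sin θ := rfl
lemma eI_imJ (θ : ℝ) : (eIθ θ).imJ = 0 := rfl
lemma eI_imK (θ : ℝ) : (eIθ θ).imK = 0 := rfl
lemma e2_re (θ : ℝ) : (e2 θ).re = 0 := by
  simp [e2, qI_re, qI_imI, qI_imJ, qI_imK, qJ_re, qJ_imI, qJ_imJ, qJ_imK, eI_re, eI_imI, eI_imJ, eI_imK]
lemma e2_imI (θ : ℝ) : (e2 θ).imI = 0 := by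
  simp [e2, qI_re, qI_imI, qI_imJ, qI_imK, qJ_re, qJ_imI, qJ_imJ, qJ_imK, eI_re, eI_imI, eI_imJ, eI_imK]
lemma e2_imJ (θ : ℝ) : (e2 θ).imJ = - Real.sin θ := by
  simp [e2, qI_re, qI_imI, qI_imJ, qI_imK, qJ_re, qJ_imI, qJ_imJ, qJ_imK, eI_re, eI_imI, eI_imJ, eI_imK]
lemma e2_imK (θ : ℝ) : (e2 θ).imK = Real.cos θ := by
  simp [e2, qI_re, qI_imI, qI_imJ, qI_imK, qJ_re, qJ_imI, qJ_imJ, qJ_imK, eI_re, eI_imI, eI_imJ, eI_imK]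
lemma e3_re (θ : ℝ) : (e3 θ).re = 0 := by
  simp [e3, qJ_re, qJ_imI, qJ_imJ, qJ_imK, eI_re, eI_imI, eI_imJ, eI_imK]
lemma e3_imI (θ : ℝ) : (e3 θ).imI = 0 := by
  simp [e3, qJ_re, qJ_imI, qJ_imJ, qJ_imK, eI_re, eI_imI, eI_imJ, eI_imK]
lemma e3_imJ (θ : ℝ) : (e3 θ).imJ = Real.cos θ := by
  simp [e3, qJ_re, qJ_imI, qJ_imJ, qJ_imK, eI_re, eI_imI, eI_imJ, eI_imK]
lemma e3_imK (θ : ℝ) : (e3 θ).imK = Real.sin θ := by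
  simp [e3, qJ_re, qJ_imI, qJ_imJ, qJ_imK, eI_re, eI_imI, eI_imJ, eI_imK]

lemma qI_sq : qI * qI = -1 := by
  apply Quaternion.ext <;> simp [o_re, o_imI, o_imJ, o_imK, qI_re, qI_imI, qI_imJ, qI_imK]

lemma e2_sq (θ : ℝ) : e2 θ * e2 θ = -1 := by
  have := Real.sin_sq_add_cos_sq θ
  apply Quaternion.ext <;> simp [o_re, o_imI, o_imJ, o_imK, e2_re, e2_imI, e2_imJ, e2_imK] <;> nlinarith

lemma e3_sq (θ : ℝ) : e3 θ * e3 θ = -1 := by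
  have := Real.sin_sq_add_cos_sq θ
  apply Quaternion.ext <;> simp [o_re, o_imI, o_imJ, o_imK, e3_re, e3_imI, e3_imJ, e3_imK] <;> nlinarith

lemma e21 (θ : ℝ) : e2 θ * qI = - (qI * e2 θ) := by
  apply Quaternion.ext <;> simp [e2_re, e2_imI, e2_imJ, e2_imK, qI_re, qI_imI, qI_imJ, qI_imK]

lemma e31 (θ : ℝ) : e3 θ * qI = - (qI * e3 θ) := by
  apply Quaternion.ext <;> simp [e3_re, e3_imI, e3_imJ, e3_imK, qI_re, qI_imI, qI_imJ, qI_imK]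

lemma e32 (θ : ℝ) : e3 θ * e2 θ = - (e2 θ * e3 θ) := by
  apply Quaternion.ext <;>
    simp [e3_re, e3_imI, e3_imJ, e3_imK, e2_re, e2_imI, e2_imJ, e2_imK]

lemma inner_q (a b : H4) :
    inner ℝ a b = a.re * b.re + a.imI * b.imI + a.imJ * b.imJ + a.imK * b.imK := by
  rw [Quaternion.inner_def]; simp

lemma basis_expand (θ : ℝ) (w : H4) :
    inner ℝ w (1 : H4) • (1 : H4) + inner ℝ w qI • qI + inner ℝ w (e2 θ) • e2 θ
      + inner ℝ w (e3 θ) • e3 θ = w := by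
  have := Real.sin_sq_add_cos_sq θ
  simp only [inner_q]
  apply Quaternion.ext <;>
    simp [o_re, o_imI, o_imJ, o_imK, e3_re, e3_imI, e3_imJ, e3_imK, e2_re, e2_imI, e2_imJ, e2_imK, qI_re, qI_imI, qI_imJ,
      qI_imK]
  · linear_combination w.imJ * this
  · linear_combination w.imK * this

lemma integral_cmul {μ : Measure H4} (q : H4) (f : H4 → H4) (hf : Integrable f μ) :
    ∫ w, q * f w ∂μ = q * ∫ w, f w ∂μ :=
  (ContinuousLinearMap.mul ℝ H4 q).integral_comp_comm hf

lemma integral_mulc {μ : Measure H4} (q : H4) (f : H4 → H4) (hf : Integrable f μ) :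
    ∫ w, f w * q ∂μ = (∫ w, f w ∂μ) * q :=
  ((ContinuousLinearMap.mul ℝ H4).flip q).integral_comp_comm hf

/-! ### Integration by parts -/

lemma ibp_symm (ψ : H4 → ℝ) (hψ : ContDiff ℝ 2 ψ) (hc : HasCompactSupport ψ)
    (G : H4 → H4) (hG : ContDiff ℝ 1 G) (a b : H4) :
    ∫ w, fderiv ℝ ψ w a • fderiv ℝ G w b = ∫ w, fderiv ℝ ψ w b • fderiv ℝ G w a := by
  have hd1 : ContDiff ℝ 1 (fderiv ℝ ψ) := hψ.fderiv_right (by norm_num)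
  have hG0 : Continuous (fderiv ℝ G) := hG.continuous_fderiv (by norm_num)
  have hψ2 : Continuous (fderiv ℝ (fderiv ℝ ψ)) := hd1.continuous_fderiv (by norm_num)
  have hcd : HasCompactSupport (fderiv ℝ ψ) := hc.fderiv ℝ
  have hcdd : HasCompactSupport (fderiv ℝ (fderiv ℝ ψ)) := hcd.fderiv ℝ
  have key : ∀ a b : H4, ∫ w, fderiv ℝ ψ w a • fderiv ℝ G w b
      = - ∫ w, (fderiv ℝ (fderiv ℝ ψ) w b a) • G w := by
    intro a b
    have hfd : ∀ w, fderiv ℝ (fun w => fderiv ℝ ψ w a) w b = fderiv ℝ (fderiv ℝ ψ) w b a := by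
      intro w
      rw [fderiv_clm_apply ((hd1.differentiable (by norm_num)) w) (by fun_prop)]
      simp
    have hca : HasCompactSupport (fun w => fderiv ℝ ψ w a) := by
      refine hcd.mono ?_
      intro x hx h
      simp at hx h
      simp [h] at hx
    have hcab : HasCompactSupport (fun w => fderiv ℝ (fderiv ℝ ψ) w b a) := by
      refine hcdd.mono ?_
      intro x hx h
      simp at hx h
      simp [h] at hx
    have := integral_smul_fderiv_eq_neg_fderiv_smul_of_integrable (μ := (volume : Measure H4))
      (f := fun w => fderiv ℝ ψ w a) (g := G) (v := b) ?_ ?_ ?_ ?_ ?_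
    · simpa only [hfd] using this
    · simp only [hfd]
      exact (Continuous.integrable_of_hasCompactSupport (by fun_prop) hcab.smul_right)
    · exact (Continuous.integrable_of_hasCompactSupport (by fun_prop) hca.smul_right)
    · exact (Continuous.integrable_of_hasCompactSupport (by fun_prop) hca.smul_right)
    · intro x _
      have := (hd1.differentiable (by norm_num)) x
      fun_prop
    · intro x _
      exact (hG.differentiable (by norm_num)) x
  rw [key, key]
  congr 2
  ext1 w
  have : IsSymmSndFDerivAt ℝ ψ w := hψ.contDiffAt.isSymmSndFDerivAt (by simp)
  rw [this a b]

lemma grad_orth (θ : ℝ) (ψ : H4 → ℝ) (hψ : ContDiff ℝ 2 ψ) (hc : HasCompactSupport ψ)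
    (G : H4 → H4) (hG : ContDiff ℝ 1 G) (hD : ∀ w, fderiv ℝ ψ w ≠ 0 → Dl θ G w = 0) :
    ∫ w, (fderiv ℝ ψ w 1 • fderiv ℝ G w 1 + fderiv ℝ ψ w qI • fderiv ℝ G w qI
      + fderiv ℝ ψ w (e2 θ) • fderiv ℝ G w (e2 θ)
      + fderiv ℝ ψ w (e3 θ) • fderiv ℝ G w (e3 θ)) = 0 := by
  have hd1 : ContDiff ℝ 1 (fderiv ℝ ψ) := hψ.fderiv_right (by norm_num)
  have hψ1 : Continuous (fderiv ℝ ψ) := hd1.continuous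
  have hG0 : Continuous (fderiv ℝ G) := hG.continuous_fderiv (by norm_num)
  have hcd : HasCompactSupport (fderiv ℝ ψ) := hc.fderiv ℝ
  have hint : ∀ a b : H4, Integrable (fun w => fderiv ℝ ψ w a • fderiv ℝ G w b) := by
    intro a b
    have hca : HasCompactSupport (fun w => fderiv ℝ ψ w a) := by
      refine hcd.mono ?_
      intro x hx h
      simp at hx h
      simp [h] at hx
    exact (Continuous.integrable_of_hasCompactSupport (by fun_prop) hca.smul_right)
  have hrow : ∀ a : H4, (∫ w, fderiv ℝ ψ w a • fderiv ℝ G w 1)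
      + qI * (∫ w, fderiv ℝ ψ w a • fderiv ℝ G w qI)
      + e2 θ * (∫ w, fderiv ℝ ψ w a • fderiv ℝ G w (e2 θ))
      + e3 θ * (∫ w, fderiv ℝ ψ w a • fderiv ℝ G w (e3 θ)) = 0 := by
    intro a
    rw [← integral_cmul _ _ (hint _ _), ← integral_cmul _ _ (hint _ _),
      ← integral_cmul _ _ (hint _ _), ← integral_add, ← integral_add, ← integral_add]
    · rw [← integral_zero H4 H4]
      congr 1
      ext1 w
      by_cases h : fderiv ℝ ψ w = 0
      · simp [h]
      · have := hD w h
        simp only [mul_smul_comm, ← smul_add]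
        rw [Dl] at this
        rw [this, smul_zero]
    all_goals first
      | exact hint _ _
      | exact (hint _ _).const_mul _
      | exact (hint _ _).add ((hint _ _).const_mul _)
      | exact ((hint _ _).add ((hint _ _).const_mul _)).add ((hint _ _).const_mul _)
  rw [integral_add, integral_add, integral_add]
  rotate_left
  · exact hint _ _
  · exact hint _ _
  · exact (hint _ _).add (hint _ _)
  · exact hint _ _
  · exact ((hint _ _).add (hint _ _)).add (hint _ _)
  · exact hint _ _
  have r0 := hrow 1
  have r1 := congrArg (fun x => qI * x) (hrow qI)
  have r2 := congrArg (fun x => e2 θ * x) (hrow (e2 θ))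
  have r3 := congrArg (fun x => e3 θ * x) (hrow (e3 θ))
  rw [ibp_symm ψ hψ hc G hG qI 1] at r1
  rw [ibp_symm ψ hψ hc G hG (e2 θ) 1, ibp_symm ψ hψ hc G hG (e2 θ) qI] at r2
  rw [ibp_symm ψ hψ hc G hG (e3 θ) 1, ibp_symm ψ hψ hc G hG (e3 θ) qI,
    ibp_symm ψ hψ hc G hG (e3 θ) (e2 θ)] at r3
  simp only [mul_add, ← mul_assoc, qI_sq, e2_sq, e3_sq, e21, e31, e32, mul_zero, neg_mul,
    one_mul] at r1 r2 r3
  generalize (∫ w, fderiv ℝ ψ w 1 • fderiv ℝ G w 1) = a00 at *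
  generalize (∫ w, fderiv ℝ ψ w qI • fderiv ℝ G w qI) = a11 at *
  generalize (∫ w, fderiv ℝ ψ w (e2 θ) • fderiv ℝ G w (e2 θ)) = a22 at *
  generalize (∫ w, fderiv ℝ ψ w (e3 θ) • fderiv ℝ G w (e3 θ)) = a33 at *
  have := congrArg₂ (· - ·) r0 (congrArg₂ (· + ·) (congrArg₂ (· + ·) r1 r2) r3)
  simp only [add_zero, sub_zero] at this
  rw [← this]
  abel

/-! ### Radial kernels and the mean value property -/

/-- The derivative of `expNegInvGlue`. -/
def dGlue (x : ℝ) : ℝ := (Polynomial.X ^ 2 : Polynomial ℝ).eval x⁻¹ * expNegInvGlue x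

/-- A radial bump function. -/
def psiK (r : ℝ) (w : H4) : ℝ := expNegInvGlue (r ^ 2 - ‖w‖ ^ 2)

/-- The radial averaging kernel. -/
def phiK (r : ℝ) (w : H4) : ℝ := dGlue (r ^ 2 - ‖w‖ ^ 2)

lemma hasDerivAt_glue (x : ℝ) : HasDerivAt expNegInvGlue (dGlue x) x := by
  have := expNegInvGlue.hasDerivAt_polynomial_eval_inv_mul 1 x
  simpa [dGlue] using this

lemma dGlue_contDiff {n : ℕ∞} : ContDiff ℝ n dGlue :=
  expNegInvGlue.contDiff_polynomial_eval_inv_mul _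

lemma psiK_contDiff {n : ℕ∞} (r : ℝ) : ContDiff ℝ n (psiK r) :=
  expNegInvGlue.contDiff.comp (contDiff_const.sub (contDiff_norm_sq ℝ))

lemma phiK_contDiff {n : ℕ∞} (r : ℝ) : ContDiff ℝ n (phiK r) :=
  dGlue_contDiff.comp (contDiff_const.sub (contDiff_norm_sq ℝ))

lemma phiK_nonneg (r : ℝ) (w : H4) : 0 ≤ phiK r w := by
  unfold phiK dGlue
  have := expNegInvGlue.nonneg (r ^ 2 - ‖w‖ ^ 2)
  simp only [Polynomial.eval_pow, Polynomial.eval_X]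
  positivity

lemma phiK_zero_pos (r : ℝ) (hr : 0 < r) : phiK r 0 ≠ 0 := by
  unfold phiK dGlue
  have := expNegInvGlue.pos_of_pos (x := r ^ 2) (by positivity)
  simp
  exact hr.ne'

lemma phiK_eq_zero (r : ℝ) (hr : 0 < r) (w : H4) (hw : r ≤ ‖w‖) : phiK r w = 0 := by
  unfold phiK dGlue
  rw [expNegInvGlue.zero_of_nonpos, mul_zero]
  nlinarith

lemma psiK_eq_zero (r : ℝ) (hr : 0 < r) (w : H4) (hw : r ≤ ‖w‖) : psiK r w = 0 := by
  unfold psiK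
  rw [expNegInvGlue.zero_of_nonpos]
  nlinarith

lemma psiK_compact (r : ℝ) (hr : 0 < r) : HasCompactSupport (psiK r) := by
  refine HasCompactSupport.intro (isCompact_closedBall (0 : H4) r) ?_
  intro x hx
  apply psiK_eq_zero r hr
  simp at hx
  exact hx.le

lemma phiK_compact (r : ℝ) (hr : 0 < r) : HasCompactSupport (phiK r) := by
  refine HasCompactSupport.intro (isCompact_closedBall (0 : H4) r) ?_
  intro x hx
  apply phiK_eq_zero r hr
  simp at hx
  exact hx.le

lemma phiK_int_pos (r : ℝ) (hr : 0 < r) : 0 < ∫ w, phiK r w :=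
  (phiK_contDiff (n := 0) r).continuous.integral_pos_of_hasCompactSupport_nonneg_nonzero
    (phiK_compact r hr) (phiK_nonneg r) (phiK_zero_pos r hr)

lemma fderiv_psiK (r : ℝ) (w v : H4) :
    fderiv ℝ (psiK r) w v = - (2 * phiK r w) * inner ℝ w v := by
  have h1 : HasFDerivAt (fun w : H4 => r ^ 2 - ‖w‖ ^ 2) (0 - 2 • (innerSL ℝ w)) w :=
    (hasFDerivAt_const _ _).sub (HasStrictFDerivAt.hasFDerivAt (hasStrictFDerivAt_norm_sq w))
  have h2 := (hasDerivAt_glue (r ^ 2 - ‖w‖ ^ 2)).comp_hasFDerivAt w h1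
  have h3 : fderiv ℝ (psiK r) w = _ := h2.fderiv
  rw [h3]
  simp [phiK]
  ring

lemma deriv_vanish (θ r : ℝ) (hr : 0 < r) (G : H4 → H4) (hG : ContDiff ℝ 1 G)
    (z : H4) (hD : ∀ w ∈ Metric.ball z r, Dl θ G w = 0) (t : ℝ) (ht : 0 ≤ t) (ht1 : t ≤ 1) :
    ∫ w, phiK r w • fderiv ℝ G (z + t • w) w = 0 := by
  rcases ht.eq_or_lt with rfl | ht
  · have h : ∀ w : H4, phiK r (-w) • fderiv ℝ G (z + (0 : ℝ) • (-w)) (-w)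
        = - (phiK r w • fderiv ℝ G (z + (0 : ℝ) • w) w) := by
      intro w; simp [phiK]
    have h2 := integral_neg_eq_self
      (fun w : H4 => phiK r w • fderiv ℝ G (z + (0 : ℝ) • w) w) (volume : Measure H4)
    simp only [h, integral_neg] at h2
    generalize (∫ w : H4, phiK r w • fderiv ℝ G (z + (0 : ℝ) • w) w) = x at h2
    have h3 : (2 : ℝ) • x = 0 := by
      rw [two_smul]
      nth_rewrite 1 [← h2]
      exact neg_add_cancel x
    simpa using h3
  · have hG' : ContDiff ℝ 1 (fun w => G (z + t • w)) := by fun_prop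
    have hfd : ∀ w v, fderiv ℝ (fun w => G (z + t • w)) w v = t • fderiv ℝ G (z + t • w) v := by
      intro w v
      have h1 : HasFDerivAt (fun w : H4 => z + t • w) (t • ContinuousLinearMap.id ℝ H4) w :=
        ((hasFDerivAt_id w).const_smul t).const_add z
      have h2 := ((hG.differentiable (by norm_num)) (z + t • w)).hasFDerivAt.comp w h1
      have h3 : fderiv ℝ (fun w => G (z + t • w)) w = _ := h2.fderiv
      rw [h3]
      simp
    have key := grad_orth θ (psiK r) (psiK_contDiff (n := 2) r) (psiK_compact r hr)
      (fun w => G (z + t • w)) hG' ?_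
    · have hE : ∀ w : H4, phiK r w • fderiv ℝ G (z + t • w) w = (-(2 * t)⁻¹) •
        (fderiv ℝ (psiK r) w 1 • fderiv ℝ (fun w => G (z + t • w)) w 1
        + fderiv ℝ (psiK r) w qI • fderiv ℝ (fun w => G (z + t • w)) w qI
        + fderiv ℝ (psiK r) w (e2 θ) • fderiv ℝ (fun w => G (z + t • w)) w (e2 θ)
        + fderiv ℝ (psiK r) w (e3 θ) • fderiv ℝ (fun w => G (z + t • w)) w (e3 θ)) := by
        intro w
        simp only [hfd, fderiv_psiK]
        conv_lhs => rw [← basis_expand θ w]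
        rw [basis_expand θ w]
        conv_lhs => enter [2, 2]; rw [← basis_expand θ w]
        simp only [map_add, map_smul, smul_add, smul_smul]
        congr 1
        · congr 1
          · congr 1
            · congr 1; field_simp
            · congr 1; field_simp
          · congr 1; field_simp
        · congr 1; field_simp
      simp only [hE]
      rw [integral_smul, key, smul_zero]
    · intro w hw
      have hw' : ‖w‖ < r := by
        by_contra hcon
        apply hw
        ext v
        rw [fderiv_psiK, phiK_eq_zero r hr w (not_lt.1 hcon)]
        simp
      have : Dl θ (fun w => G (z + t • w)) w = t • Dl θ G (z + t • w) := by
        simp only [Dl, hfd, smul_add, mul_smul_comm]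
      rw [this, hD, smul_zero]
      simp only [Metric.mem_ball, dist_self_add_left, norm_smul, Real.norm_eq_abs, abs_of_pos ht]
      nlinarith [norm_nonneg w]

lemma mean_value (θ r : ℝ) (hr : 0 < r) (G : H4 → H4) (hG : ContDiff ℝ 1 G)
    (z : H4) (hD : ∀ w ∈ Metric.ball z r, Dl θ G w = 0) :
    ∫ w, phiK r w • G (z + w) = (∫ w, phiK r w) • G z := by
  have hφ : Continuous (phiK r) := (phiK_contDiff (n := 0) r).continuous
  have hG0 : Continuous (fderiv ℝ G) := hG.continuous_fderiv (by norm_num)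
  have hGk : Continuous G := hG.continuous
  have hcont : Continuous (fun p : ℝ × H4 => phiK r p.2 • fderiv ℝ G (z + p.1 • p.2) p.2) :=
    (hφ.comp continuous_snd).smul ((hG0.comp (by fun_prop)).clm_apply continuous_snd)
  have hder : ∀ t : ℝ, HasDerivAt (fun t : ℝ => ∫ w, phiK r w • G (z + t • w))
      (∫ w, phiK r w • fderiv ℝ G (z + t • w) w) t := by
    intro t
    obtain ⟨C, hC⟩ := ((isCompact_closedBall t 1).prod
      (isCompact_closedBall (0 : H4) r)).exists_bound_of_continuousOn hcont.continuousOn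
    refine (hasDerivAt_integral_of_dominated_loc_of_deriv_le (s := Metric.closedBall t 1)
      (F := fun t w => phiK r w • G (z + t • w))
      (F' := fun t w => phiK r w • fderiv ℝ G (z + t • w) w)
      (bound := (Metric.closedBall (0 : H4) r).indicator (fun _ => C))
      (Metric.closedBall_mem_nhds t one_pos) ?_ ?_ ?_ ?_ ?_ ?_).2
    · refine Filter.Eventually.of_forall fun s => ?_
      exact (by fun_prop : Continuous fun w => phiK r w • G (z + s • w)).aestronglyMeasurable
    · exact (by fun_prop : Continuous fun w =>
        phiK r w • G (z + t • w)).integrable_of_hasCompactSupport (phiK_compact r hr).smul_right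
    · exact (hcont.comp (Continuous.prodMk_right t)).aestronglyMeasurable
    · refine Filter.Eventually.of_forall fun w s hs => ?_
      by_cases hw : w ∈ Metric.closedBall (0 : H4) r
      · rw [Set.indicator_of_mem hw]
        exact hC (s, w) ⟨hs, hw⟩
      · rw [Set.indicator_of_notMem hw, phiK_eq_zero r hr w (by simp at hw; exact hw.le), zero_smul,
          norm_zero]
    · exact (integrable_indicator_iff Metric.isClosed_closedBall.measurableSet).2
        (integrableOn_const (isCompact_closedBall (0 : H4) r).measure_lt_top.ne)
    · refine Filter.Eventually.of_forall fun w s _ => ?_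
      have h1 : HasDerivAt (fun s : ℝ => z + s • w) w s := by
        simpa using ((hasDerivAt_id s).smul_const w).const_add z
      exact ((((hG.differentiable (by norm_num)) (z + s • w)).hasFDerivAt).comp_hasDerivAt s
        h1).const_smul (phiK r w)
  have := constant_of_has_deriv_right_zero (f := fun t : ℝ => ∫ w, phiK r w • G (z + t • w))
    (a := 0) (b := 1) (fun t _ => (hder t).continuousAt.continuousWithinAt) ?_ 1 (by simp)
  · simpa [integral_smul_const] using this
  · intro t ht
    have h := hder t
    rw [deriv_vanish θ r hr G hG z hD t ht.1 ht.2.le] at h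
    exact h.hasDerivWithinAt

/-! ### Local representation formula -/

lemma Dl_exp (θ : ℝ) (u : H4) (f : H4 → H4) (w : H4) (hf : DifferentiableAt ℝ f w) :
    Dl θ (fun w => Real.exp (inner ℝ u w) • f w) w = Real.exp (inner ℝ u w) • Dlu θ u f w := by
  have h1 : HasFDerivAt (fun w : H4 => Real.exp (inner ℝ u w))
      (Real.exp (inner ℝ u w) • innerSL ℝ u) w := by
    have := (innerSL ℝ u).hasFDerivAt (x := w)
    exact (Real.hasDerivAt_exp _).comp_hasFDerivAt w this
  have h2 : ∀ v, fderiv ℝ (fun w => Real.exp (inner ℝ u w) • f w) w v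
      = Real.exp (inner ℝ u w) • (fderiv ℝ f w v + (inner ℝ u v : ℝ) • f w) := by
    intro v
    have h3 := (h1.smul hf.hasFDerivAt).fderiv
    have h4 : fderiv ℝ (fun w => Real.exp (inner ℝ u w) • f w) w = _ := h3
    rw [h4]
    simp [smul_smul]
  simp only [Dl, Dlu, h2]
  conv_rhs => enter [2, 2, 1]; rw [← basis_expand θ u]
  simp only [mul_smul_comm, mul_add, add_mul, smul_mul_assoc, one_mul, smul_add, smul_smul]
  abel

lemma rep (θ : ℝ) (u : H4) (Ω : Set H4) (hΩo : IsOpen Ω) (z0 : H4) (hz0 : z0 ∈ Ω) :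
    ∃ k : H4 → ℝ, ContDiff ℝ 1 k ∧ HasCompactSupport k ∧ ∃ ε > 0, Metric.ball z0 ε ⊆ Ω ∧
      ∀ f, memA θ u Ω f → ∀ z ∈ Metric.ball z0 ε, f z = ∫ ζ in Ω, k (z - ζ) • f ζ := by
  obtain ⟨R, hR, hRΩ⟩ := Metric.isOpen_iff.1 hΩo z0 hz0
  obtain ⟨r, hr, hrR⟩ : ∃ r : ℝ, 0 < r ∧ 4 * r = R := ⟨R / 4, by positivity, by ring⟩
  subst hrR
  set c : ℝ := ∫ w, phiK r w with hc
  have hcpos : 0 < c := phiK_int_pos r hr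
  refine ⟨fun w => (c⁻¹ * Real.exp (- inner ℝ u w)) * phiK r w, ?_, ?_, r, hr, ?_, ?_⟩
  · have := phiK_contDiff (n := 1) r
    have h2 : ContDiff ℝ 1 (fun w : H4 => (inner ℝ u w : ℝ)) := contDiff_const.inner ℝ contDiff_id
    exact (contDiff_const.mul (Real.contDiff_exp.comp h2.neg)).mul this
  · exact (phiK_compact r hr).mul_left
  · exact (Metric.ball_subset_ball (by linarith)).trans hRΩ
  intro f hf z hz
  obtain ⟨hf1, hf2, -⟩ := hf
  let χ : ContDiffBump z0 := ⟨2 * r, 3 * r, by positivity, by linarith⟩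
  have hfat : ∀ x ∈ Ω, ContDiffAt ℝ 1 f x := fun x hx => hf1.contDiffAt (hΩo.mem_nhds hx)
  let G : H4 → H4 := fun w => χ w • (Real.exp (inner ℝ u w) • f w)
  have hG : ContDiff ℝ 1 G := by
    rw [contDiff_iff_contDiffAt]
    intro x
    by_cases hx1 : x ∈ tsupport χ
    swap
    · have h0 := notMem_tsupport_iff_eventuallyEq.1 hx1
      have h1 : G =ᶠ[nhds x] (fun _ => (0 : H4)) := by
        filter_upwards [h0] with y hy
        have hy' : χ y = 0 := hy
        show χ y • (Real.exp (inner ℝ u y) • f y) = 0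
        rw [hy', zero_smul]
      exact contDiffAt_const.congr_of_eventuallyEq h1
    have hx2 : x ∈ Ω := by
      rw [χ.tsupport_eq] at hx1
      exact hRΩ (Metric.closedBall_subset_ball (by show 3 * r < 4 * r; linarith) hx1)
    have h2 : ContDiff ℝ 1 (fun w : H4 => (inner ℝ u w : ℝ)) := contDiff_const.inner ℝ contDiff_id
    exact χ.contDiff.contDiffAt.smul
      ((Real.contDiff_exp.comp h2).contDiffAt.smul (hfat x hx2))
  have hone : ∀ w ∈ Metric.ball z r, χ w = 1 := by
    intro w hw
    apply χ.one_of_mem_closedBall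
    show dist w z0 ≤ 2 * r
    have h1 : dist w z < r := hw
    have h2 : dist z z0 < r := hz
    linarith [dist_triangle w z z0]
  have hsub : Metric.ball z r ⊆ Ω := by
    intro w hw
    apply hRΩ
    show dist w z0 < 4 * r
    have h1 : dist w z < r := hw
    have h2 : dist z z0 < r := hz
    linarith [dist_triangle w z z0]
  have hD : ∀ w ∈ Metric.ball z r, Dl θ G w = 0 := by
    intro w hw
    have he : G =ᶠ[nhds w] (fun w => Real.exp (inner ℝ u w) • f w) := by
      filter_upwards [Metric.isOpen_ball.mem_nhds hw] with x hx
      simp only [G, hone x hx, one_smul]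
    have : Dl θ G w = Dl θ (fun w => Real.exp (inner ℝ u w) • f w) w := by
      simp only [Dl, he.fderiv_eq]
    rw [this, Dl_exp θ u f w ((hfat w (hsub hw)).differentiableAt (by norm_num)), hf2 w (hsub hw),
      smul_zero]
  have key := mean_value θ r hr G hG z hD
  have hzz : z ∈ Metric.ball z r := Metric.mem_ball_self hr
  have hshift : ∫ w, phiK r w • G (z + w) = ∫ ζ, phiK r (ζ - z) • G ζ := by
    rw [← integral_add_left_eq_self (fun ζ => phiK r (ζ - z) • G ζ) z]
    simp
  rw [hshift, ← hc] at key
  have hfz : f z = ∫ ζ, (c⁻¹ * Real.exp (- inner ℝ u z)) • (phiK r (ζ - z) • G ζ) := by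
    rw [integral_smul, key, smul_smul]
    simp only [G, hone z hzz, one_smul, smul_smul, one_mul]
    have : c⁻¹ * Real.exp (-inner ℝ u z) * c * Real.exp (inner ℝ u z) = 1 := by
      rw [Real.exp_neg]
      field_simp
    rw [this, one_smul]
  rw [setIntegral_eq_integral_of_forall_compl_eq_zero]
  · rw [hfz]
    congr 1
    ext1 ζ
    by_cases hζ : ζ ∈ Metric.ball z r
    · simp only [G, hone ζ hζ, one_smul, smul_smul, one_mul]
      congr 1
      have : phiK r (ζ - z) = phiK r (z - ζ) := by simp only [phiK, norm_sub_rev]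
      rw [this, inner_sub_right, neg_sub, Real.exp_sub, Real.exp_neg]
      ring
    · have h1 : r ≤ ‖z - ζ‖ := by
        simpa [dist_eq_norm, norm_sub_rev] using hζ
      beta_reduce
      rw [phiK_eq_zero r hr (z - ζ) h1, phiK_eq_zero r hr (ζ - z) (by rwa [norm_sub_rev])]
      simp
  · intro ζ hζ
    have h1 : r ≤ ‖z - ζ‖ := by
      by_contra hcon
      apply hζ
      apply hsub
      simpa [dist_eq_norm, norm_sub_rev] using hcon
    beta_reduce
    rw [phiK_eq_zero r hr (z - ζ) h1]
    simp
/-! ### Smoothing by convolution and pairings -/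

lemma conv_generic {G E : Type} [NormedAddCommGroup G] [NormedSpace ℝ G] [MeasurableSpace G]
    [BorelSpace G] [FiniteDimensional ℝ G] [NormedAddCommGroup E] [NormedSpace ℝ E]
    [CompleteSpace E] (μ : Measure G) [μ.IsAddHaarMeasure] (Ω : Set G) (hΩ : MeasurableSet Ω)
    (F : G → E) (hF : IntegrableOn F Ω μ) (k : G → ℝ) (hk : ContDiff ℝ 1 k)
    (hc : HasCompactSupport k) :
    ContDiff ℝ 1 (fun z => ∫ ζ in Ω, k (z - ζ) • F ζ ∂μ) ∧
    ∀ z v, fderiv ℝ (fun z => ∫ ζ in Ω, k (z - ζ) • F ζ ∂μ) z v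
      = ∫ ζ in Ω, (fderiv ℝ k (z - ζ) v) • F ζ ∂μ := by
  have hloc : LocallyIntegrable (Ω.indicator F) μ :=
    ((integrable_indicator_iff hΩ).2 hF).locallyIntegrable
  have he : ∀ g : G → ℝ, ∀ z : G, ∫ ζ in Ω, g (z - ζ) • F ζ ∂μ
      = convolution (Ω.indicator F) g (ContinuousLinearMap.lsmul ℝ ℝ (E := E)).flip μ z := by
    intro g z
    rw [← integral_indicator hΩ, convolution]
    congr 1
    ext1 ζ
    by_cases h : ζ ∈ Ω <;> simp [h]
  have he' : (fun z => ∫ ζ in Ω, k (z - ζ) • F ζ ∂μ) =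
      convolution (Ω.indicator F) k (ContinuousLinearMap.lsmul ℝ ℝ (E := E)).flip μ :=
    funext (he k)
  constructor
  · rw [he']
    exact hc.contDiff_convolution_right _ hloc hk
  · intro z v
    rw [he', (hc.hasFDerivAt_convolution_right _ hloc hk z).fderiv,
      convolution_precompR_apply _ hloc (hc.fderiv ℝ) (hk.continuous_fderiv one_ne_zero)]
    exact (he (fun x => fderiv ℝ k x v) z).symm

/-- Pairing of an `L²` function with a fixed real-valued `L²` function. -/
lemma pairing_generic {X E : Type} [MeasurableSpace X] [NormedAddCommGroup E] [NormedSpace ℝ E]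
    [CompleteSpace E] (μ : Measure X) (g : X → ℝ) (hg : MemLp g 2 μ) :
    ∃ T : Lp E 2 μ →L[ℝ] E, ∀ F : Lp E 2 μ, T F = ∫ x, g x • F x ∂μ := by
  refine ⟨(ContinuousLinearMap.lsmul ℝ ℝ (E := E)).lpPairing μ 2 2 (hg.toLp g), fun F => ?_⟩
  rw [ContinuousLinearMap.lpPairing_eq_integral]
  apply integral_congr_ae
  filter_upwards [hg.coeFn_toLp] with x hx
  rw [hx]; simp

/-! ### The Bergman space as a closed subspace of `L²` -/

lemma memA_memLp (θ : ℝ) (u : H4) (Ω : Set H4) (hΩo : IsOpen Ω) (f : H4 → H4)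
    (hf : memA θ u Ω f) : MemLp f 2 (volume.restrict Ω) := by
  have h1 : AEStronglyMeasurable f (volume.restrict Ω) :=
    hf.1.continuousOn.aestronglyMeasurable hΩo.measurableSet
  exact (memLp_two_iff_integrable_sq_norm h1).2 hf.2.2

lemma memA_of_memLp (θ : ℝ) (u : H4) (Ω : Set H4) (f : H4 → H4)
    (h1 : ContDiffOn ℝ 1 f Ω) (h2 : ∀ z ∈ Ω, Dlu θ u f z = 0)
    (h3 : MemLp f 2 (volume.restrict Ω)) : memA θ u Ω f :=
  ⟨h1, h2, (memLp_two_iff_integrable_sq_norm h3.1).1 h3⟩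

lemma memA_diff {θ : ℝ} {u : H4} {Ω : Set H4} (hΩo : IsOpen Ω) {f : H4 → H4}
    (hf : memA θ u Ω f) {z : H4} (hz : z ∈ Ω) : DifferentiableAt ℝ f z :=
  (hf.1.contDiffAt (hΩo.mem_nhds hz)).differentiableAt (by norm_num)

lemma memA_add {θ : ℝ} {u : H4} {Ω : Set H4} (hΩo : IsOpen Ω) {f g : H4 → H4}
    (hf : memA θ u Ω f) (hg : memA θ u Ω g) : memA θ u Ω (fun z => f z + g z) := by
  refine memA_of_memLp _ _ _ _ (hf.1.add hg.1) (fun z hz => ?_)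
    ((memA_memLp _ _ _ hΩo _ hf).add (memA_memLp _ _ _ hΩo _ hg))
  have h : ∀ v, fderiv ℝ (fun z => f z + g z) z v = fderiv ℝ f z v + fderiv ℝ g z v := by
    intro v
    rw [fderiv_fun_add (memA_diff hΩo hf hz) (memA_diff hΩo hg hz)]
    rfl
  have h1 := hf.2.1 z hz
  have h2 := hg.2.1 z hz
  have h3 : Dlu θ u (fun z => f z + g z) z = Dlu θ u f z + Dlu θ u g z := by
    simp only [Dlu, Dl, h, mul_add]
    abel
  rw [h3, h1, h2, add_zero]

lemma memA_mulr {θ : ℝ} {u : H4} {Ω : Set H4} (hΩo : IsOpen Ω) {f : H4 → H4}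
    (hf : memA θ u Ω f) (q : H4) : memA θ u Ω (fun z => f z * q) := by
  refine memA_of_memLp _ _ _ _ (hf.1.mul contDiffOn_const) (fun z hz => ?_) ?_
  · have h : ∀ v, fderiv ℝ (fun z => f z * q) z v = fderiv ℝ f z v * q := by
      intro v
      rw [((memA_diff hΩo hf hz).hasFDerivAt.mul_const' q).fderiv]
      rfl
    have h1 := hf.2.1 z hz
    have h3 : Dlu θ u (fun z => f z * q) z = Dlu θ u f z * q := by
      simp only [Dlu, Dl, h, add_mul, mul_assoc]
    rw [h3, h1, zero_mul]
  · have h := memA_memLp _ _ _ hΩo _ hf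
    refine MemLp.of_le_mul (c := ‖q‖) h ?_ ?_
    · exact h.1.mul aestronglyMeasurable_const
    · filter_upwards with x
      rw [norm_mul, mul_comm]

lemma memA_smul {θ : ℝ} {u : H4} {Ω : Set H4} (hΩo : IsOpen Ω) {f : H4 → H4}
    (hf : memA θ u Ω f) (c : ℝ) : memA θ u Ω (fun z => c • f z) := by
  have := memA_mulr hΩo hf (c : H4)
  simpa only [Quaternion.mul_coe_eq_smul] using this

lemma memA_zero {θ : ℝ} {u : H4} {Ω : Set H4} : memA θ u Ω (fun _ => 0) := by
  refine memA_of_memLp _ _ _ _ contDiffOn_const (fun z hz => ?_) (MemLp.zero)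
  simp [Dlu, Dl]

lemma shift_memLp {Ω : Set H4} (k : H4 → ℝ) (hk : Continuous k) (hc : HasCompactSupport k)
    (z : H4) : MemLp (fun ζ => k (z - ζ)) 2 (volume.restrict Ω) := by
  have h1 : Continuous (fun ζ => k (z - ζ)) := by fun_prop
  have h2 : HasCompactSupport (fun ζ => k (z - ζ)) :=
    hc.comp_homeomorph (Homeomorph.subLeft z)
  exact h1.memLp_of_hasCompactSupport h2

lemma dir_continuous {k : H4 → ℝ} (hk : ContDiff ℝ 1 k) (v : H4) :
    Continuous (fun x => fderiv ℝ k x v) :=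
  (hk.continuous_fderiv one_ne_zero).clm_apply continuous_const

lemma dir_compact {k : H4 → ℝ} (hc : HasCompactSupport k) (v : H4) :
    HasCompactSupport (fun x => fderiv ℝ k x v) := by
  refine HasCompactSupport.of_support_subset_isCompact (hc.fderiv (𝕜 := ℝ)).isCompact ?_
  intro x hx
  apply subset_tsupport
  intro h
  apply hx
  show fderiv ℝ k x v = 0
  rw [h]; rfl

/-- The operator `F ↦ Dlu (k ⋆ F) (z)` is continuous on `L²`. -/
lemma dlu_conv (θ : ℝ) (u : H4) (Ω : Set H4) (hΩo : IsOpen Ω) (hΩb : Bornology.IsBounded Ω)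
    (k : H4 → ℝ) (hk : ContDiff ℝ 1 k) (hc : HasCompactSupport k) (z : H4) :
    ∃ Λ : Lp H4 2 (volume.restrict Ω) → H4, Continuous Λ ∧
      ∀ F : Lp H4 2 (volume.restrict Ω), ∀ f : H4 → H4,
        f =ᶠ[nhds z] (fun z => ∫ ζ in Ω, k (z - ζ) • F ζ) →
        ContDiffAt ℝ 1 f z ∧ Dlu θ u f z = Λ F := by
  have hfin : IsFiniteMeasure (volume.restrict Ω) :=
    ⟨by rw [Measure.restrict_apply_univ]; exact hΩb.measure_lt_top⟩
  choose T hT using fun v : H4 => pairing_generic (E := H4) (volume.restrict Ω) _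
    (shift_memLp (Ω := Ω) (fun x => fderiv ℝ k x v) (dir_continuous hk v) (dir_compact hc v) z)
  obtain ⟨T0, hT0⟩ := pairing_generic (E := H4) (volume.restrict Ω) _
    (shift_memLp (Ω := Ω) k hk.continuous hc z)
  refine ⟨fun F => T 1 F + qI * T qI F + e2 θ * T (e2 θ) F + e3 θ * T (e3 θ) F + u * T0 F, ?_, ?_⟩
  · have h0 := T0.continuous
    have h := fun v => (T v).continuous
    exact ((((h 1).add (continuous_const.mul (h _))).add (continuous_const.mul (h _))).add
      (continuous_const.mul (h _))).add (continuous_const.mul h0)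
  · intro F f hf
    have hF : IntegrableOn F Ω volume := (Lp.memLp F).integrable (by norm_num)
    obtain ⟨h1, h2⟩ := conv_generic volume Ω hΩo.measurableSet F hF k hk hc
    refine ⟨h1.contDiffAt.congr_of_eventuallyEq hf, ?_⟩
    simp only [Dlu, Dl, hf.fderiv_eq, h2, hf.self_of_nhds, hT, hT0]

lemma closed_seq (θ : ℝ) (u : H4) (Ω : Set H4) (hΩo : IsOpen Ω) (hΩb : Bornology.IsBounded Ω)
    (F : Lp H4 2 (volume.restrict Ω)) (Fn : ℕ → Lp H4 2 (volume.restrict Ω)) (fn : ℕ → H4 → H4)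
    (hfn : ∀ n, memA θ u Ω (fn n)) (he : ∀ n, Fn n =ᵐ[volume.restrict Ω] fn n)
    (hlim : Filter.Tendsto Fn Filter.atTop (nhds F)) :
    ∃ f, memA θ u Ω f ∧ F =ᵐ[volume.restrict Ω] f := by
  classical
  have hrep : ∀ z0 : Ω, _ := fun z0 => rep θ u Ω hΩo z0 z0.2
  choose k hk hc ε hε hball hr using hrep
  -- representation of the `fn n` through `Fn n`
  have hrn : ∀ (z0 : Ω) (n : ℕ) (z : H4), z ∈ Metric.ball (z0 : H4) (ε z0) →
      fn n z = ∫ ζ in Ω, k z0 (z - ζ) • Fn n ζ := by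
    intro z0 n z hz
    rw [hr z0 (fn n) (hfn n) z hz]
    apply integral_congr_ae
    filter_upwards [he n] with x hx
    rw [hx]
  have hconv : ∀ (z0 : Ω) (z : H4), z ∈ Metric.ball (z0 : H4) (ε z0) →
      Filter.Tendsto (fun n => fn n z) Filter.atTop
        (nhds (∫ ζ in Ω, k z0 (z - ζ) • F ζ)) := by
    intro z0 z hz
    obtain ⟨T, hT⟩ := pairing_generic (E := H4) (volume.restrict Ω) _
      (shift_memLp (Ω := Ω) (k z0) (hk z0).continuous (hc z0) z)
    have h := (T.continuous.tendsto F).comp hlim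
    rw [hT F] at h
    refine h.congr fun n => ?_
    rw [hrn z0 n z hz]
    exact hT (Fn n)
  let f : H4 → H4 := fun z => if h : z ∈ Ω then ∫ ζ in Ω, k ⟨z, h⟩ (z - ζ) • F ζ else 0
  have hlimf : ∀ z ∈ Ω, Filter.Tendsto (fun n => fn n z) Filter.atTop (nhds (f z)) := by
    intro z hz
    have := hconv ⟨z, hz⟩ z (Metric.mem_ball_self (hε _))
    simpa only [f, hz, dite_true] using this
  have hfe : ∀ z0 : Ω, f =ᶠ[nhds (z0 : H4)] (fun z => ∫ ζ in Ω, k z0 (z - ζ) • F ζ) := by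
    intro z0
    filter_upwards [Metric.ball_mem_nhds (z0 : H4) (hε z0)] with z hz
    exact tendsto_nhds_unique (hlimf z (hball z0 hz)) (hconv z0 z hz)
  have hae : F =ᵐ[volume.restrict Ω] f := by
    obtain ⟨ns, hns, hns2⟩ := (tendstoInMeasure_of_tendsto_Lp hlim).exists_seq_tendsto_ae
    have hall : ∀ᵐ x ∂(volume.restrict Ω), ∀ n, Fn n x = fn n x := ae_all_iff.2 he
    filter_upwards [hns2, hall, ae_restrict_mem hΩo.measurableSet] with x h1 h2 h3
    have h4 := (hlimf x h3).comp hns.tendsto_atTop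
    refine tendsto_nhds_unique (h1.congr fun n => ?_) h4
    exact h2 (ns n)
  refine ⟨f, memA_of_memLp _ _ _ _ ?_ ?_ ?_, hae⟩
  · intro z hz
    obtain ⟨Λ, -, hΛ⟩ := dlu_conv θ u Ω hΩo hΩb (k ⟨z, hz⟩) (hk _) (hc _) z
    exact (hΛ F f (hfe ⟨z, hz⟩)).1.contDiffWithinAt
  · intro z hz
    obtain ⟨Λ, hΛc, hΛ⟩ := dlu_conv θ u Ω hΩo hΩb (k ⟨z, hz⟩) (hk _) (hc _) z
    rw [(hΛ F f (hfe ⟨z, hz⟩)).2]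
    have h1 := (hΛc.tendsto F).comp hlim
    refine tendsto_nhds_unique h1 (tendsto_const_nhds.congr fun n => ?_)
    have h2 : fn n =ᶠ[nhds z] (fun w => ∫ ζ in Ω, k ⟨z, hz⟩ (w - ζ) • Fn n ζ) := by
      filter_upwards [Metric.ball_mem_nhds z (hε ⟨z, hz⟩)] with w hw
      exact hrn ⟨z, hz⟩ n w hw
    have h3 := (hΛ (Fn n) (fn n) h2).2
    rw [(hfn n).2.1 z hz] at h3
    exact h3
  · exact (memLp_congr_ae hae).1 (Lp.memLp F)

/-- The Bergman space as a real subspace of `L²`. -/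
def bergS (θ : ℝ) (u : H4) (Ω : Set H4) (hΩo : IsOpen Ω) :
    Submodule ℝ (Lp H4 2 (volume.restrict Ω)) where
  carrier := {F | ∃ f, memA θ u Ω f ∧ F =ᵐ[volume.restrict Ω] f}
  add_mem' := by
    rintro F G ⟨f, hf, hF⟩ ⟨g, hg, hG⟩
    refine ⟨_, memA_add hΩo hf hg, ?_⟩
    filter_upwards [hF, hG, Lp.coeFn_add F G] with x h1 h2 h3
    rw [h3, Pi.add_apply, h1, h2]
  zero_mem' := ⟨_, memA_zero, Lp.coeFn_zero _ _ _⟩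
  smul_mem' := by
    rintro c F ⟨f, hf, hF⟩
    refine ⟨_, memA_smul hΩo hf c, ?_⟩
    filter_upwards [hF, Lp.coeFn_smul c F] with x h1 h3
    rw [h3, Pi.smul_apply, h1]

lemma bergS_closed (θ : ℝ) (u : H4) (Ω : Set H4) (hΩo : IsOpen Ω) (hΩb : Bornology.IsBounded Ω) :
    IsClosed (bergS θ u Ω hΩo : Set (Lp H4 2 (volume.restrict Ω))) := by
  rw [← isSeqClosed_iff_isClosed]
  intro Fn F hFn hlim
  choose fn hfn he using hFn
  exact closed_seq θ u Ω hΩo hΩb F Fn fn hfn he hlim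

lemma re_eq_ext (a b : H4) (h : ∀ q : H4, (a * q).re = (b * q).re) : a = b := by
  have h1 := h (star (a - b))
  have h2 : ((a - b) * star (a - b)).re = 0 := by
    rw [sub_mul, Quaternion.re_sub, h1, sub_self]
  rw [Quaternion.self_mul_star, Quaternion.re_coe, Quaternion.normSq_eq_zero] at h2
  exact sub_eq_zero.1 h2

lemma inner_star (a b : H4) : (inner ℝ a b : ℝ) = (star a * b).re := by
  rw [inner_q]; simp

lemma re_smul_one_inner (c : ℝ) (b : H4) : (inner ℝ (c • (1 : H4)) b : ℝ) = (c • b).re := by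
  rw [inner_q]; simp [o_re, o_imI, o_imJ, o_imK]

lemma integral_qre {μ : Measure H4} (f : H4 → H4) (hf : Integrable f μ) :
    (∫ x, f x ∂μ).re = ∫ x, (f x).re ∂μ := by
  let L : H4 →L[ℝ] ℝ := innerSL ℝ (1 : H4)
  have hL : ∀ q : H4, L q = q.re := by
    intro q
    show (inner ℝ (1 : H4) q : ℝ) = q.re
    rw [inner_q]; simp [o_re, o_imI, o_imJ, o_imK]
  have := L.integral_comp_comm hf
  simp only [hL] at this
  exact this.symm

/-- existence of a reproducing Bergman kernel for `{}^θ_u𝒜(Ω)`. -/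
theorem statement8 (Ω : Set H4) (hΩo : IsOpen Ω) (hΩc : IsConnected Ω)
    (hΩb : Bornology.IsBounded Ω) (θ : ℝ) (hθ : θ ∈ Set.Ico 0 (2 * Real.pi)) (u : H4)
    (z : H4) (hz : z ∈ Ω) :
    ∃ B : H4 → H4, memA θ u Ω B ∧
      ∀ f : H4 → H4, memA θ u Ω f → f z = ∫ ζ in Ω, star (B ζ) * f ζ := by
  have hfin : IsFiniteMeasure (volume.restrict Ω) :=
    ⟨by rw [Measure.restrict_apply_univ]; exact hΩb.measure_lt_top⟩
  obtain ⟨k, hk, hc, ε, hε, hball, hr⟩ := rep θ u Ω hΩo z hz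
  have hkL := shift_memLp (Ω := Ω) k hk.continuous hc z
  have hb : MemLp (fun ζ => k (z - ζ) • (1 : H4)) 2 (volume.restrict Ω) := by
    refine MemLp.of_le_mul (c := 1) hkL (hkL.1.smul aestronglyMeasurable_const) ?_
    filter_upwards with x
    rw [norm_smul]; simp
  let b := hb.toLp _
  let S := bergS θ u Ω hΩo
  have : CompleteSpace S := (bergS_closed θ u Ω hΩo hΩb).completeSpace_coe
  obtain ⟨B, hB, hBe⟩ := (S.starProjection_apply_mem b : S.starProjection b ∈ S)
  refine ⟨B, hB, fun f hf => ?_⟩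
  have hBL := memA_memLp _ _ _ hΩo _ hB
  have hBint : ∀ g, memA θ u Ω g → IntegrableOn (fun ζ => star (B ζ) * g ζ) Ω volume := by
    intro g hg
    have hgL := memA_memLp _ _ _ hΩo _ hg
    have hsB : MemLp (fun ζ => star (B ζ)) 2 (volume.restrict Ω) := by
      refine MemLp.of_le_mul (c := 1) hBL (continuous_star.comp_aestronglyMeasurable hBL.1) ?_
      filter_upwards with x
      simp
    exact MemLp.integrable_mul hsB hgL
  have hkint : ∀ g, memA θ u Ω g → IntegrableOn (fun ζ => k (z - ζ) • g ζ) Ω volume := by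
    intro g hg
    exact memLp_one_iff_integrable.1 ((memA_memLp _ _ _ hΩo _ hg).smul hkL (p := 2) (q := 2) (r := 1))
  have key : ∀ g, memA θ u Ω g → (g z).re = (∫ ζ in Ω, star (B ζ) * g ζ).re := by
    intro g hg
    have hgL := memA_memLp _ _ _ hΩo _ hg
    have hgS : hgL.toLp g ∈ S := ⟨g, hg, hgL.coeFn_toLp⟩
    have horth : inner ℝ (S.starProjection b) (hgL.toLp g) = inner ℝ b (hgL.toLp g) := by
      rw [Submodule.inner_starProjection_left_eq_right,
        Submodule.starProjection_eq_self_iff.2 hgS]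
    rw [L2.inner_def, L2.inner_def] at horth
    rw [hr g hg z (Metric.mem_ball_self hε), integral_qre _ (hkint g hg), integral_qre _ (hBint g hg)]
    refine Eq.trans ?_ (horth.symm.trans ?_)
    · apply integral_congr_ae
      filter_upwards [hb.coeFn_toLp, hgL.coeFn_toLp] with x h1 h2
      rw [h1, h2, re_smul_one_inner]
    · apply integral_congr_ae
      filter_upwards [hBe, hgL.coeFn_toLp] with x h1 h2
      rw [h1, h2, inner_star]
  apply re_eq_ext
  intro q
  have h := key _ (memA_mulr hΩo hf q)
  rw [h, ← integral_mulc q _ (hBint f hf)]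
  simp only [mul_assoc]

end
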